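/- Let k ≥ 1 and let G be a linear k-tree on n ≥ k+1 vertices. Then the Wiener index of G satisfies W(G) ≥ (k² + k)/2 + n² − kn − n. -/

import Mathlib

open SimpleGraph Finset

/-- The Wiener index of a graph `G`: half the sum of the distances between all ordered
pairs of vertices, i.e. the sum of distances over all unordered pairs. -/
noncomputable def wienerIndex {V : Type*} [Fintype V] (G : SimpleGraph V) : ℚ :=
  (∑ u : V, ∑ v : V, (G.dist u v : ℚ)) / 2

/-- `G` is a *linear `k`-tree* if it admits a recursive labeling `v_1, …, v_n` of its
vertices (given here by a bijection `f` onto `Fin n`) such that the first `k+1` vertices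
form a `(k+1)`-clique, and every later vertex is adjacent to exactly `k` vertices with
smaller labels, which form a `k`-clique containing a vertex whose degree in the graph
induced on the earlier vertices is `k`. -/
def IsLinearKTree {V : Type*} [Fintype V] (k : ℕ) (G : SimpleGraph V) : Prop :=
  ∃ f : V ≃ Fin (Fintype.card V),
    (∀ u w : V, (f u : ℕ) < k + 1 → (f w : ℕ) < k + 1 → u ≠ w → G.Adj u w) ∧
    ∀ u : V, k + 1 ≤ (f u : ℕ) →
      {w : V | f w < f u ∧ G.Adj w u}.ncard = k ∧
      (∀ w w' : V, f w < f u → f w' < f u → G.Adj w u → G.Adj w' u → w ≠ w' → G.Adj w w') ∧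
      ∃ w : V, f w < f u ∧ G.Adj w u ∧ {w' : V | f w' < f u ∧ G.Adj w w'}.ncard = k

/-!
Distinct vertices of a connected graph are at distance at least `2` unless they are adjacent, so
`W(G) ≥ n(n - 1) - |E|`. In the order given by the labeling, the vertex of (zero-based) label `i`
has at most `min i k` earlier neighbours, so `|E| ≤ ∑ i < n, min i k = kn - k(k + 1)/2`.
-/

/-- `G` is *`k`-degenerate*: its vertices can be numbered so that each has at most `k` neighbours
with a smaller number. For a finite graph this is equivalent to every nonempty subgraph
having a vertex of degree at most `k`. -/
def IsDegenerate {V : Type*} [Fintype V] (k : ℕ) (G : SimpleGraph V) : Prop :=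
  ∃ f : V ≃ Fin (Fintype.card V), ∀ u : V, {w : V | f w < f u ∧ G.Adj w u}.ncard ≤ k

section Counting

variable {V : Type*} [Fintype V] {G : SimpleGraph V} [DecidableRel G.Adj]

lemma two_mul_card_le_sum_dist_add_degree (hG : G.Preconnected) (u : V) :
    2 * Fintype.card V ≤ ∑ v, G.dist u v + G.degree u + 2 := by
  classical
  have two_le (v : V) :
      2 ≤ G.dist u v + (if G.Adj u v then 1 else 0) + (if u = v then 2 else 0) := by
    by_cases huv : u = v
    · simp [huv]
    · by_cases hadj : G.Adj u v
      · simp [dist_eq_one_iff_adj.mpr hadj, hadj]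
      · have hdist : 1 < G.dist u v := (hG u v).one_lt_dist_of_ne_of_not_adj huv hadj
        lia
  calc 2 * Fintype.card V = ∑ _v : V, 2 := by simp [mul_comm]
    _ ≤ ∑ v, (G.dist u v + (if G.Adj u v then 1 else 0) + (if u = v then 2 else 0)) :=
      sum_le_sum fun v _ => two_le v
    _ = ∑ v, G.dist u v + G.degree u + 2 := by
      simp [sum_add_distrib, ← card_neighborFinset_eq_degree, neighborFinset_eq_filter]

lemma card_mul_card_sub_one_sub_card_edgeFinset_le_wienerIndex (hG : G.Preconnected) :
    (Fintype.card V : ℚ) * (Fintype.card V - 1) - #G.edgeFinset ≤ wienerIndex G := by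
  have hsum : ∑ _u : V, 2 * Fintype.card V ≤ ∑ u, (∑ v, G.dist u v + G.degree u + 2) :=
    sum_le_sum fun u _ => two_mul_card_le_sum_dist_add_degree hG u
  simp only [sum_add_distrib, sum_const, card_univ, smul_eq_mul,
    sum_degrees_eq_twice_card_edges] at hsum
  have hsum' : (Fintype.card V : ℚ) * (2 * Fintype.card V)
      ≤ ∑ u, ∑ v, (G.dist u v : ℚ) + 2 * #G.edgeFinset + Fintype.card V * 2 := by
    exact_mod_cast hsum
  unfold wienerIndex
  linarith

lemma card_edgeFinset_eq_sum_card_lt_and_adj {α : Type*} [LinearOrder α] {f : V → α}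
    (hf : f.Injective) : #G.edgeFinset = ∑ u, #{w | f w < f u ∧ G.Adj w u} := by
  have degree_eq (u : V) :
      G.degree u = #{w | f w < f u ∧ G.Adj w u} + #{w | f u < f w ∧ G.Adj u w} := by
    classical
    rw [← card_neighborFinset_eq_degree, ← card_union_of_disjoint]
    · congr 1
      ext w
      have hne (h : G.Adj u w) : f w < f u ∨ f u < f w := (hf.ne h.ne').lt_or_gt
      simp only [mem_neighborFinset, mem_union, mem_filter_univ, G.adj_comm w u]
      tauto
    · exact disjoint_filter.mpr fun w _ h h' => h.1.asymm h'.1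
  have sum_later : ∑ u, #{w | f u < f w ∧ G.Adj u w} = ∑ u, #{w | f w < f u ∧ G.Adj w u} :=
    sum_card_bipartiteAbove_eq_sum_card_bipartiteBelow fun u w => f u < f w ∧ G.Adj u w
  have htwice := G.sum_degrees_eq_twice_card_edges
  simp only [degree_eq, sum_add_distrib, sum_later] at htwice
  lia

end Counting

lemma ncard_lt_and_adj_le {V : Type*} {G : SimpleGraph V} {n : ℕ} {f : V → Fin n}
    (hf : f.Injective) (u : V) : {w : V | f w < f u ∧ G.Adj w u}.ncard ≤ f u :=
  calc {w : V | f w < f u ∧ G.Adj w u}.ncard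
    _ ≤ (Set.Iio (f u)).ncard :=
      Set.ncard_le_ncard_of_injOn f (fun _ hw => hw.1) hf.injOn
    _ = f u := by simp [Set.ncard_eq_toFinset_card']

lemma two_mul_sum_range_min_add {k n : ℕ} (hkn : k ≤ n) :
    2 * ∑ i ∈ range n, min i k + k * (k + 1) = 2 * k * n := by
  induction n, hkn using Nat.le_induction with
  | base =>
    have hmin : ∑ i ∈ range k, min i k = ∑ i ∈ range k, i :=
      sum_congr rfl fun i hi => min_eq_left (mem_range.mp hi).le
    rw [hmin, mul_comm 2, sum_range_id_mul_two]
    cases k with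
    | zero => rfl
    | succ k => rw [Nat.add_sub_cancel]; ring
  | succ n hkn ih =>
    rw [sum_range_succ, min_eq_right hkn]
    linarith

lemma IsDegenerate.two_mul_card_edgeFinset_add_le {V : Type*} [Fintype V] {G : SimpleGraph V}
    [DecidableRel G.Adj] {k : ℕ} (hG : IsDegenerate k G) (hk : k ≤ Fintype.card V) :
    2 * #G.edgeFinset + k * (k + 1) ≤ 2 * k * Fintype.card V := by
  obtain ⟨f, hf⟩ := hG
  have card_earlier_le (u : V) : #{w | f w < f u ∧ G.Adj w u} ≤ min (f u : ℕ) k := by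
    simpa [Set.ncard_eq_toFinset_card'] using le_min (ncard_lt_and_adj_le f.injective u) (hf u)
  have card_edges_le : #G.edgeFinset ≤ ∑ i ∈ range (Fintype.card V), min i k :=
    calc #G.edgeFinset = ∑ u, #{w | f w < f u ∧ G.Adj w u} :=
          card_edgeFinset_eq_sum_card_lt_and_adj f.injective
      _ ≤ ∑ u, min (f u : ℕ) k := sum_le_sum fun u _ => card_earlier_le u
      _ = ∑ i : Fin (Fintype.card V), min (i : ℕ) k := f.sum_comp fun i => min (i : ℕ) k
      _ = ∑ i ∈ range (Fintype.card V), min i k :=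
          Fin.sum_univ_eq_sum_range (fun i => min i k) _
  have := two_mul_sum_range_min_add hk
  lia

lemma preconnected_of_forall_exists_adj_lt {V α : Type*} [Preorder α] [WellFoundedLT α]
    {G : SimpleGraph V} (f : V → α) (r : V) (h : ∀ u ≠ r, ∃ w, f w < f u ∧ G.Adj w u) :
    G.Preconnected := by
  have reachable_root (u : V) : G.Reachable u r := by
    induction u using (InvImage.wf f wellFounded_lt).induction with
    | _ u ih =>
      by_cases hu : u = r
      · rw [hu]
      · obtain ⟨w, hlt, hadj⟩ := h u hu
        exact hadj.symm.reachable.trans (ih w hlt)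
  exact fun u v => (reachable_root u).trans (reachable_root v).symm

namespace IsLinearKTree

variable {V : Type*} [Fintype V] {k : ℕ} {G : SimpleGraph V}

lemma preconnected (hG : IsLinearKTree k G) : G.Preconnected := by
  obtain ⟨f, hclique, hlater⟩ := hG
  intro u
  have hpos : 0 < Fintype.card V := Fintype.card_pos_iff.mpr ⟨u⟩
  let r : V := f.symm ⟨0, hpos⟩
  have hr : (f r : ℕ) = 0 := by simp [r]
  refine preconnected_of_forall_exists_adj_lt f r (fun v hv => ?_) u
  rcases le_or_gt (k + 1) (f v : ℕ) with hkv | hvk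
  · obtain ⟨-, -, w, hlt, hadj, -⟩ := hlater v hkv
    exact ⟨w, hlt, hadj⟩
  · have hne : (f v : ℕ) ≠ f r := Fin.val_ne_of_ne (f.injective.ne hv)
    exact ⟨r, Fin.lt_def.mpr (by lia), hclique r v (by lia) hvk hv.symm⟩

lemma isDegenerate (hG : IsLinearKTree k G) : IsDegenerate k G := by
  obtain ⟨f, -, hlater⟩ := hG
  refine ⟨f, fun u => ?_⟩
  rcases le_or_gt (k + 1) (f u : ℕ) with hku | huk
  · exact (hlater u hku).1.le
  · exact (ncard_lt_and_adj_le f.injective u).trans (Nat.lt_succ_iff.mp huk)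

end IsLinearKTree

theorem wienerIndex_linearKTree_lower_bound_general {V : Type*} [Fintype V] {k : ℕ}
    {G : SimpleGraph V} (hconn : G.Preconnected) (hG : IsDegenerate k G)
    (hn : k ≤ Fintype.card V) :
    ((k : ℚ) ^ 2 + k) / 2 + (Fintype.card V : ℚ) ^ 2 - k * Fintype.card V - Fintype.card V
      ≤ wienerIndex G := by
  classical
  have hedges : (2 * #G.edgeFinset + k * (k + 1) : ℚ) ≤ 2 * k * Fintype.card V := by
    exact_mod_cast hG.two_mul_card_edgeFinset_add_le hn
  have hwiener := card_mul_card_sub_one_sub_card_edgeFinset_le_wienerIndex hconn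
  linarith

/-- A linear `k`-tree (`k ≥ 1`) on `n ≥ k + 1` vertices has Wiener index at least
`(k² + k)/2 + n² - kn - n`. -/
theorem wienerIndex_linearKTree_lower_bound {V : Type*} [Fintype V]
    (k : ℕ) (hk : 1 ≤ k) (G : SimpleGraph V) (hG : IsLinearKTree k G)
    (hn : k + 1 ≤ Fintype.card V) :
    ((k : ℚ) ^ 2 + k) / 2 + (Fintype.card V : ℚ) ^ 2 - k * Fintype.card V - Fintype.card V
      ≤ wienerIndex G := by
  exact wienerIndex_linearKTree_lower_bound_general hG.preconnected hG.isDegenerate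
    ((Nat.le_succ k).trans hn)
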